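/- For every integer k ≥ 1, every 0 < p < ∞, and every polynomial P on ℝ^k, one has (∫_ℝ |t|^p dγ_1(t))^{1/p} · ‖∇P‖_{L^p(γ_k)} ≤ (deg P) · ‖P‖_{L^p(γ_k)}. -/

import Mathlib

open MeasureTheory ProbabilityTheory Real

/-- The standard Gaussian measure on `ℝ^k`. -/
noncomputable def gaussMeasure (k : ℕ) : Measure (Fin k → ℝ) :=
  Measure.pi fun _ => gaussianReal 0 1

/-- The `L^p` norm with respect to the standard Gaussian measure on `ℝ^k`. -/
noncomputable def lpNormGauss {k : ℕ} (p : ℝ) (f : (Fin k → ℝ) → ℝ) : ℝ :=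
  (∫ x, |f x| ^ p ∂(gaussMeasure k)) ^ (1 / p)

/-- The Euclidean length of the gradient of a polynomial on `ℝ^k`. -/
noncomputable def gradNorm {k : ℕ} (P : MvPolynomial (Fin k) ℝ) (x : Fin k → ℝ) : ℝ :=
  Real.sqrt (∑ j, (MvPolynomial.eval x (MvPolynomial.pderiv j P)) ^ 2)

/-!
The Gaussian measure `μ ⊗ μ` is invariant under the rotations
`(x, y) ↦ (cos θ • x + sin θ • y, -sin θ • x + cos θ • y)`, and along such an orbit a polynomial
`P` is a trigonometric polynomial of degree at most `deg P`. Averaging the `L^p` Bernstein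
inequality over orbits bounds `∫∫ |∇P(x) · y|^p` by `(deg P)^p ∫ |P|^p`; for fixed `x` the variable
`∇P(x) · y` is a centred Gaussian with standard deviation `|∇P(x)|`, which produces the moment.

The Bernstein inequality for every `p > 0` follows Arestov. By Jensen's formula, the circle average
of `log⁺ |Q|` is the average over `|a| = 1` of the logarithmic Mahler measures of `Q - a z^m`, and
`|u|^p` is an integral of `log⁺ |e^s u|` against a positive density in `s`. It therefore suffices to
compare the Mahler measures of `z Q' - c Q` and of `Q`. Reflecting in the unit circle the roots of
`Q` outside the unit disc gives a polynomial of the same Mahler measure, now the modulus of its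
leading coefficient, which dominates `Q` where `|z| ≥ 1`; the operator `z d/dz - c` preserves this
domination (de Bruijn).
-/

open Polynomial Filter Set

section CircleAverage

theorem circleAverage_mono_codiscreteWithin {f g : ℂ → ℝ} {c : ℂ} {R : ℝ} (hR : R ≠ 0)
    (hf : CircleIntegrable f c R) (hg : CircleIntegrable g c R)
    (h : f ≤ᶠ[codiscreteWithin (Metric.sphere c |R|)] g) :
    circleAverage f c R ≤ circleAverage g c R := by
  have hfg : f =ᶠ[codiscreteWithin (Metric.sphere c |R|)] f ⊓ g :=
    h.mono fun z hz => (inf_eq_left.2 hz).symm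
  rw [circleAverage_congr_codiscreteWithin hfg hR]
  exact circleAverage_mono (hf.congr_codiscreteWithin hfg) hg fun z _ => inf_le_right

theorem lintegral_ofReal_comp_circleMap {f : ℂ → ℝ} {c : ℂ} {R : ℝ}
    (hf : CircleIntegrable f c R) (hf0 : 0 ≤ f) :
    ∫⁻ θ in Ioc 0 (2 * π), ENNReal.ofReal (f (circleMap c R θ)) =
      ENNReal.ofReal (2 * π * circleAverage f c R) := by
  rw [circleAverage_def, smul_eq_mul, mul_inv_cancel_left₀ two_pi_pos.ne',
    intervalIntegral.integral_of_le two_pi_pos.le,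
    ofReal_integral_eq_lintegral_ofReal hf.1 (.of_forall fun _ => hf0 _)]

end CircleAverage

section MahlerMeasure

theorem circleIntegrable_log_norm_eval (Q : ℂ[X]) (c : ℂ) (R : ℝ) :
    CircleIntegrable (fun z => log ‖Q.eval z‖) c R :=
  MeromorphicOn.circleIntegrable_log_norm
    fun z _ => (Q.differentiable.analyticAt z).meromorphicAt

theorem mahlerMeasure_le_of_norm_eval_le {P Q : ℂ[X]}
    (h : ∀ z : ℂ, ‖z‖ = 1 → ‖P.eval z‖ ≤ ‖Q.eval z‖) : P.mahlerMeasure ≤ Q.mahlerMeasure := by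
  rcases eq_or_ne P 0 with rfl | hP
  · simp [mahlerMeasure_nonneg]
  have hsphere : (Metric.sphere (0 : ℂ) 1).Infinite :=
    (isPreconnected_sphere (by simp) 0 1).infinite_of_nontrivial
      ⟨1, by simp, -1, by simp, by norm_num⟩
  have hQ : Q ≠ 0 := by
    rintro rfl
    refine hP (eq_zero_of_infinite_isRoot P (hsphere.mono fun z hz => ?_))
    simpa using h z (by simpa using hz)
  have hroots : {z | P.eval z ≠ 0} ∈ codiscreteWithin (Metric.sphere (0 : ℂ) |1|) := by
    refine codiscreteWithin_mono (subset_univ _) ?_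
    exact (P.finite_setOfPred_isRoot hP).compl_mem_codiscrete
  have hlog : P.logMahlerMeasure ≤ Q.logMahlerMeasure := by
    refine circleAverage_mono_codiscreteWithin one_ne_zero (circleIntegrable_log_norm_eval P 0 1)
      (circleIntegrable_log_norm_eval Q 0 1) ?_
    filter_upwards [hroots, self_mem_codiscreteWithin _] with z hz hz1
    exact log_le_log (norm_pos_iff.2 hz) (h z (by simpa using hz1))
  rwa [logMahlerMeasure_eq_log_MahlerMeasure, logMahlerMeasure_eq_log_MahlerMeasure,
    log_le_log_iff (mahlerMeasure_pos_of_ne_zero hP) (mahlerMeasure_pos_of_ne_zero hQ)] at hlog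

theorem mahlerMeasure_eq_norm_leadingCoeff {Q : ℂ[X]}
    (hQ : ∀ z : ℂ, 1 < ‖z‖ → Q.eval z ≠ 0) : Q.mahlerMeasure = ‖Q.leadingCoeff‖ := by
  have hroots : Q.roots.map (fun r => max 1 ‖r‖) = Q.roots.map fun _ => 1 :=
    Multiset.map_congr rfl fun r hr =>
      max_eq_left (not_lt.1 fun hr1 => hQ r hr1 (isRoot_of_mem_roots hr))
  simp [mahlerMeasure_eq_leadingCoeff_mul_prod_roots, hroots]

theorem circleAverage_log_norm_eval_div_pow_sub (Q : ℂ[X]) (m : ℕ) (a : ℂ) :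
    circleAverage (fun z => log ‖Q.eval z / z ^ m - a‖) 0 1 =
      (Q - C a * X ^ m).logMahlerMeasure := by
  refine circleAverage_congr_sphere fun z hz => ?_
  have hz1 : ‖z‖ = 1 := by simpa using hz
  have hz0 : z ≠ 0 := norm_ne_zero_iff.1 (by simp [hz1])
  have hdiv : Q.eval z / z ^ m - a = (Q.eval z - a * z ^ m) / z ^ m := by field_simp
  simp [hdiv, hz1]

theorem meromorphic_eval_div_pow (Q : ℂ[X]) (m : ℕ) : Meromorphic fun z : ℂ => Q.eval z / z ^ m :=
  fun z => (Q.differentiable.analyticAt z).meromorphicAt.div (by fun_prop)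

theorem circleIntegrable_logMahlerMeasure_sub (Q : ℂ[X]) (m : ℕ) :
    CircleIntegrable (fun a => (Q - C a * X ^ m).logMahlerMeasure) 0 1 := by
  simpa only [circleAverage_log_norm_eval_div_pow_sub] using
    ValueDistribution.circleIntegrable_circleAverage_log_norm_sub (R := 1)
      (meromorphic_eval_div_pow Q m)

theorem circleAverage_logMahlerMeasure_sub (Q : ℂ[X]) (m : ℕ) :
    circleAverage (fun a => (Q - C a * X ^ m).logMahlerMeasure) 0 1 =
      circleAverage (fun z => log⁺ ‖Q.eval z‖) 0 1 := by
  have h := congrFun (ValueDistribution.circleAverage_circleAverage_eq_proximity_top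
    (meromorphic_eval_div_pow Q m)) 1
  simp only [circleAverage_log_norm_eval_div_pow_sub, ValueDistribution.proximity_top] at h
  refine h.trans (circleAverage_congr_sphere fun z hz => ?_)
  have hz1 : ‖z‖ = 1 := by simpa using hz
  simp [hz1]

end MahlerMeasure

section Reflection

/-- The linear factor `X - r`, replaced by its reflection `1 - conj r * X` in the unit circle when
`r` lies outside the closed unit disc. -/
noncomputable def discFactor (r : ℂ) : ℂ[X] :=
  if ‖r‖ ≤ 1 then X - C r else C (-(starRingEnd ℂ r)) * X + C 1

/-- The polynomial of degree `N` obtained from `Q` by reflecting in the unit circle all roots of `Q`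
outside the closed unit disc. A polynomial of degree `d < N` is regarded as having a root of order
`N - d` at infinity, which is reflected to `0`. -/
noncomputable def discReflect (N : ℕ) (Q : ℂ[X]) : ℂ[X] :=
  C Q.leadingCoeff * X ^ (N - Q.natDegree) * (Q.roots.map discFactor).prod

theorem norm_sub_le_norm_eval_discFactor {z : ℂ} (hz : 1 ≤ ‖z‖) (r : ℂ) :
    ‖z - r‖ ≤ ‖(discFactor r).eval z‖ := by
  unfold discFactor
  split_ifs with hr
  · simp
  · have hidentity : ‖1 - starRingEnd ℂ r * z‖ ^ 2 - ‖z - r‖ ^ 2 =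
        (‖z‖ ^ 2 - 1) * (‖r‖ ^ 2 - 1) := by
      simp only [← Complex.normSq_eq_norm_sq, Complex.normSq_apply, Complex.sub_re, Complex.sub_im,
        Complex.mul_re, Complex.mul_im, Complex.conj_re, Complex.conj_im, Complex.one_re,
        Complex.one_im]
      ring
    have hnonneg : 0 ≤ (‖z‖ ^ 2 - 1) * (‖r‖ ^ 2 - 1) :=
      mul_nonneg (sub_nonneg.2 (one_le_pow₀ hz)) (sub_nonneg.2 (one_le_pow₀ (not_le.1 hr).le))
    calc ‖z - r‖ ≤ ‖1 - starRingEnd ℂ r * z‖ :=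
          le_of_sq_le_sq (sub_nonneg.1 (hidentity ▸ hnonneg)) (norm_nonneg _)
      _ = _ := by simp [sub_eq_neg_add]

theorem eval_discFactor_ne_zero {z : ℂ} (hz : 1 < ‖z‖) (r : ℂ) : (discFactor r).eval z ≠ 0 := by
  unfold discFactor
  split_ifs with hr
  · rw [eval_sub, eval_X, eval_C, sub_ne_zero]
    rintro rfl
    exact hz.not_ge hr
  · intro h
    have hrz : starRingEnd ℂ r * z = 1 := by
      simp only [eval_add, eval_mul, eval_C, eval_X] at h
      linear_combination -h
    have hnorm : ‖r‖ * ‖z‖ = 1 := by simpa using congrArg norm hrz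
    exact (one_lt_mul_of_lt_of_le (not_le.1 hr) hz.le).ne' hnorm

theorem natDegree_discFactor (r : ℂ) : (discFactor r).natDegree = 1 := by
  unfold discFactor
  split_ifs with hr
  · exact natDegree_X_sub_C r
  · have hr0 : r ≠ 0 := by rintro rfl; simp at hr
    exact natDegree_linear (by simpa using hr0)

theorem norm_leadingCoeff_discFactor (r : ℂ) : ‖(discFactor r).leadingCoeff‖ = max 1 ‖r‖ := by
  unfold discFactor
  split_ifs with hr
  · simp [hr]
  · have hr0 : r ≠ 0 := by rintro rfl; simp at hr
    rw [leadingCoeff_linear (by simpa using hr0)]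
    simp [(not_le.1 hr).le]

theorem natDegree_discReflect {N : ℕ} {Q : ℂ[X]} (hQ0 : Q ≠ 0) (hQ : Q.natDegree ≤ N) :
    (discReflect N Q).natDegree = N := by
  have hfactor : (0 : ℂ[X]) ∉ Q.roots.map discFactor := by
    rw [Multiset.mem_map]
    rintro ⟨r, -, hr⟩
    simpa [hr] using natDegree_discFactor r
  have hlc : C Q.leadingCoeff ≠ 0 := by simpa using hQ0
  rw [discReflect, natDegree_mul (mul_ne_zero hlc (pow_ne_zero _ X_ne_zero))
      (Multiset.prod_ne_zero hfactor), natDegree_C_mul_X_pow _ _ (leadingCoeff_ne_zero.2 hQ0),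
    natDegree_multiset_prod _ hfactor, Multiset.map_map]
  simp [natDegree_discFactor, ← (IsAlgClosed.splits Q).natDegree_eq_card_roots, hQ]

theorem norm_leadingCoeff_discReflect (N : ℕ) (Q : ℂ[X]) :
    ‖(discReflect N Q).leadingCoeff‖ = Q.mahlerMeasure := by
  have hprod := map_multiset_prod (normHom (α := ℂ))
    (Q.roots.map fun r => (discFactor r).leadingCoeff)
  simp only [normHom, Multiset.map_map, Function.comp_def, norm_leadingCoeff_discFactor,
    MonoidWithZeroHom.coe_mk, ZeroHom.coe_mk] at hprod
  simp [discReflect, leadingCoeff_multiset_prod, hprod,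
    mahlerMeasure_eq_leadingCoeff_mul_prod_roots]

theorem norm_eval_le_norm_eval_discReflect (N : ℕ) (Q : ℂ[X]) {z : ℂ} (hz : 1 ≤ ‖z‖) :
    ‖Q.eval z‖ ≤ ‖(discReflect N Q).eval z‖ := by
  have hprod : ∀ s : Multiset ℂ,
      ‖(s.map fun r => z - r).prod‖ ≤ ‖(s.map fun r => (discFactor r).eval z).prod‖ := by
    intro s
    induction s using Multiset.induction_on with
    | empty => simp
    | cons r s ih =>
      simp only [Multiset.map_cons, Multiset.prod_cons, norm_mul]
      gcongr
      exact norm_sub_le_norm_eval_discFactor hz r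
  calc ‖Q.eval z‖ = ‖Q.leadingCoeff‖ * 1 * ‖(Q.roots.map fun r => z - r).prod‖ := by
        rw [(IsAlgClosed.splits Q).eval_eq_prod_roots, norm_mul, mul_one]
    _ ≤ ‖Q.leadingCoeff‖ * ‖z‖ ^ (N - Q.natDegree) *
          ‖(Q.roots.map fun r => (discFactor r).eval z).prod‖ := by
        gcongr
        · exact one_le_pow₀ hz
        · exact hprod _
    _ = ‖(discReflect N Q).eval z‖ := by
        simp [discReflect, eval_multiset_prod]

theorem eval_discReflect_ne_zero (N : ℕ) {Q : ℂ[X]} (hQ : Q ≠ 0) {z : ℂ} (hz : 1 < ‖z‖) :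
    (discReflect N Q).eval z ≠ 0 := by
  have hz0 : z ≠ 0 := norm_pos_iff.1 (one_pos.trans hz)
  simp [discReflect, eval_multiset_prod, hQ, hz0, Multiset.prod_eq_zero_iff,
    eval_discFactor_ne_zero hz]

end Reflection

section AngularDeriv

/-- The operator `X d/dX - c`. Under the correspondence `T(θ) = e^{-icθ} Q(e^{iθ})` between
polynomials and trigonometric polynomials it represents `-i d/dθ`. -/
noncomputable def angularDeriv {R : Type*} [CommRing R] (c : R) : R[X] →ₗ[R] R[X] :=
  LinearMap.mulLeft R X ∘ₗ derivative - c • LinearMap.id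

section CommRing

variable {R : Type*} [CommRing R] {c : R} {Q : R[X]}

theorem eval_angularDeriv (c z : R) (Q : R[X]) :
    (angularDeriv c Q).eval z = z * Q.derivative.eval z - c * Q.eval z := by
  simp [angularDeriv]

theorem coeff_angularDeriv (c : R) (Q : R[X]) (m : ℕ) :
    (angularDeriv c Q).coeff m = (m - c) * Q.coeff m := by
  cases m with
  | zero => simp [angularDeriv]
  | succ m =>
    simp only [angularDeriv, LinearMap.sub_apply, LinearMap.comp_apply, LinearMap.mulLeft_apply,
      LinearMap.smul_apply, LinearMap.id_apply, coeff_sub, coeff_X_mul, coeff_derivative,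
      coeff_smul, smul_eq_mul]
    push_cast
    ring

theorem leadingCoeff_angularDeriv [IsDomain R] (hc : (Q.natDegree : R) ≠ c) :
    (angularDeriv c Q).leadingCoeff = (Q.natDegree - c) * Q.leadingCoeff := by
  rcases eq_or_ne Q 0 with rfl | hQ
  · simp
  have hcoeff := coeff_angularDeriv c Q Q.natDegree
  have hdeg : (angularDeriv c Q).natDegree = Q.natDegree := by
    refine natDegree_eq_of_le_of_coeff_ne_zero ?_ ?_
    · refine natDegree_le_iff_coeff_eq_zero.2 fun m hm => ?_
      rw [coeff_angularDeriv, coeff_eq_zero_of_natDegree_lt hm, mul_zero]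
    · rw [hcoeff]
      exact mul_ne_zero (sub_ne_zero.2 hc) (leadingCoeff_ne_zero.2 hQ)
  rw [leadingCoeff, hdeg, hcoeff, leadingCoeff]

end CommRing

theorem half_lt_re_div_sub {z r : ℂ} (h : ‖r‖ < ‖z‖) : 1 / 2 < (z / (z - r)).re := by
  have hzr : z - r ≠ 0 := sub_ne_zero.2 fun hzr => h.ne' (congrArg norm hzr)
  have hsq : Complex.normSq r < Complex.normSq z := by
    simpa only [Complex.normSq_eq_norm_sq] using pow_lt_pow_left₀ h (norm_nonneg r) two_ne_zero
  rw [Complex.div_re, ← add_div, div_lt_div_iff₀ two_pos (Complex.normSq_pos.2 hzr)]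
  simp only [Complex.normSq_apply, Complex.sub_re, Complex.sub_im] at *
  linarith

variable {c : ℂ} {P Q : ℂ[X]} {N : ℕ}

theorem natDegree_div_two_lt_re_mul_eval_derivative_div_eval (hQ : Q.natDegree ≠ 0)
    (hroots : ∀ z : ℂ, 1 < ‖z‖ → Q.eval z ≠ 0) {z : ℂ} (hz : 1 < ‖z‖) :
    (Q.natDegree : ℝ) / 2 < (z * (Q.derivative.eval z / Q.eval z)).re := by
  have hcard := (IsAlgClosed.splits Q).natDegree_eq_card_roots
  have hre : (z * (Q.derivative.eval z / Q.eval z)).re =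
      (Q.roots.map fun r => (z / (z - r)).re).sum := by
    rw [(IsAlgClosed.splits Q).eval_derivative_div_eval_of_ne_zero (hroots z hz),
      ← Multiset.sum_map_mul_left, ← Complex.coe_reAddGroupHom, map_multiset_sum, Multiset.map_map]
    simp [div_eq_mul_inv]
  have hlt : (Q.roots.map fun _ => (1 / 2 : ℝ)).sum <
      (Q.roots.map fun r => (z / (z - r)).re).sum := by
    refine Multiset.sum_lt_sum_of_nonempty (fun h => hQ (by simp [hcard, h])) fun r hr => ?_
    refine half_lt_re_div_sub (lt_of_le_of_lt ?_ hz)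
    exact not_lt.1 fun hr1 => hroots r hr1 (isRoot_of_mem_roots hr)
  rw [hre]
  refine lt_of_eq_of_lt ?_ hlt
  simp [hcard, div_eq_mul_inv]

theorem eval_angularDeriv_ne_zero (hQ : Q.natDegree ≠ 0) (hc : 2 * c.re ≤ Q.natDegree)
    (hroots : ∀ z : ℂ, 1 < ‖z‖ → Q.eval z ≠ 0) {z : ℂ} (hz : 1 < ‖z‖) :
    (angularDeriv c Q).eval z ≠ 0 := by
  intro h
  have hlt := natDegree_div_two_lt_re_mul_eval_derivative_div_eval hQ hroots hz
  have hc' : z * (Q.derivative.eval z / Q.eval z) = c := by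
    rw [eval_angularDeriv, sub_eq_zero] at h
    rw [← mul_div_assoc, h, mul_div_cancel_right₀ _ (hroots z hz)]
  rw [hc'] at hlt
  linarith

-- If the inequality failed at `z`, then `angularDeriv c (l • Q - P)` would vanish at `z` for some
-- `l` with `1 < ‖l‖`, although `l • Q - P` has no roots outside the closed unit disc.
theorem norm_eval_angularDeriv_le_of_one_lt (hQ : Q.natDegree ≠ 0) (hc : 2 * c.re ≤ Q.natDegree)
    (hPQ : P.natDegree ≤ Q.natDegree) (hcoeff : ‖P.coeff Q.natDegree‖ ≤ ‖Q.leadingCoeff‖)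
    (hroots : ∀ z : ℂ, 1 < ‖z‖ → Q.eval z ≠ 0)
    (hle : ∀ z : ℂ, 1 < ‖z‖ → ‖P.eval z‖ ≤ ‖Q.eval z‖) {z : ℂ} (hz : 1 < ‖z‖) :
    ‖(angularDeriv c P).eval z‖ ≤ ‖(angularDeriv c Q).eval z‖ := by
  have hQz : (angularDeriv c Q).eval z ≠ 0 := eval_angularDeriv_ne_zero hQ hc hroots hz
  by_contra! hlt
  obtain ⟨l, hl⟩ : ∃ l, l * (angularDeriv c Q).eval z = (angularDeriv c P).eval z :=
    ⟨_, div_mul_cancel₀ _ hQz⟩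
  have hl1 : 1 < ‖l‖ := by
    rw [← hl, norm_mul] at hlt
    exact (lt_mul_iff_one_lt_left (norm_pos_iff.2 hQz)).1 hlt
  have hne : ∀ {a b : ℂ}, b ≠ 0 → ‖a‖ ≤ ‖b‖ → l * b - a ≠ 0 := by
    intro a b hb hab h
    refine hab.not_gt ?_
    rw [← sub_eq_zero.1 h, norm_mul]
    exact (lt_mul_iff_one_lt_left (norm_pos_iff.2 hb)).2 hl1
  have hdeg : (l • Q - P).natDegree = Q.natDegree := by
    refine natDegree_eq_of_le_of_coeff_ne_zero
      ((natDegree_sub_le _ _).trans (max_le (natDegree_smul_le _ _) hPQ)) ?_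
    rw [coeff_sub, coeff_smul, smul_eq_mul, coeff_natDegree]
    exact hne (leadingCoeff_ne_zero.2 (ne_zero_of_natDegree_gt (Nat.pos_of_ne_zero hQ))) hcoeff
  refine eval_angularDeriv_ne_zero (hdeg ▸ hQ) (hdeg ▸ hc) (fun w hw => ?_) hz
    (show (angularDeriv c (l • Q - P)).eval z = 0 by simp [hl])
  simpa using hne (hroots w hw) (hle w hw)

theorem norm_eval_angularDeriv_le (hQ : Q.natDegree ≠ 0) (hc : 2 * c.re ≤ Q.natDegree)
    (hPQ : P.natDegree ≤ Q.natDegree) (hcoeff : ‖P.coeff Q.natDegree‖ ≤ ‖Q.leadingCoeff‖)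
    (hroots : ∀ z : ℂ, 1 < ‖z‖ → Q.eval z ≠ 0)
    (hle : ∀ z : ℂ, 1 < ‖z‖ → ‖P.eval z‖ ≤ ‖Q.eval z‖) {z : ℂ} (hz : 1 ≤ ‖z‖) :
    ‖(angularDeriv c P).eval z‖ ≤ ‖(angularDeriv c Q).eval z‖ := by
  have hmem : z ∈ closure {w : ℂ | 1 < ‖w‖} := by
    have hcompl : {w : ℂ | 1 < ‖w‖} = (Metric.closedBall 0 1)ᶜ := by ext; simp
    rw [hcompl, closure_compl, interior_closedBall _ one_ne_zero]
    simpa using hz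
  refine le_on_closure (f := fun w => ‖(angularDeriv c P).eval w‖)
    (g := fun w => ‖(angularDeriv c Q).eval w‖)
    (fun w hw => norm_eval_angularDeriv_le_of_one_lt hQ hc hPQ hcoeff hroots hle hw) ?_ ?_ hmem
  all_goals fun_prop

theorem mahlerMeasure_angularDeriv_le (hQ : Q.natDegree ≤ N) (hc : 2 * c.re ≤ N) :
    (angularDeriv c Q).mahlerMeasure ≤ ‖N - c‖ * Q.mahlerMeasure := by
  rcases eq_or_ne Q 0 with rfl | hQ0
  · simp
  rcases eq_or_ne N 0 with rfl | hN
  · obtain ⟨a, rfl⟩ := natDegree_eq_zero.1 (Nat.le_zero.1 hQ)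
    have hconst : angularDeriv c (C a) = C (-c * a) := by simp [angularDeriv, smul_C]
    simp only [hconst, mahlerMeasure_const, norm_mul, norm_neg, Nat.cast_zero, zero_sub, le_rfl]
  set R := discReflect N Q
  have hdeg : R.natDegree = N := natDegree_discReflect hQ0 hQ
  have hroots : ∀ z : ℂ, 1 < ‖z‖ → R.eval z ≠ 0 := fun z => eval_discReflect_ne_zero N hQ0
  have hNc : (R.natDegree : ℂ) ≠ c := by
    rw [hdeg]
    rintro rfl
    rw [Complex.natCast_re] at hc
    have hNpos : (0 : ℝ) < N := Nat.cast_pos.2 (Nat.pos_of_ne_zero hN)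
    linarith
  have hcoeff : ‖Q.coeff R.natDegree‖ ≤ ‖R.leadingCoeff‖ := by
    rw [norm_leadingCoeff_discReflect, hdeg]
    rcases hQ.eq_or_lt with rfl | hlt
    · exact leadingCoeff_le_mahlerMeasure Q
    · simp [coeff_eq_zero_of_natDegree_lt hlt, mahlerMeasure_nonneg]
  calc (angularDeriv c Q).mahlerMeasure ≤ (angularDeriv c R).mahlerMeasure :=
        mahlerMeasure_le_of_norm_eval_le fun z hz =>
          norm_eval_angularDeriv_le (hdeg ▸ hN) (hdeg ▸ hc) (hQ.trans hdeg.ge) hcoeff hroots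
            (fun w hw => norm_eval_le_norm_eval_discReflect N Q hw.le) hz.ge
    _ = ‖(angularDeriv c R).leadingCoeff‖ :=
        mahlerMeasure_eq_norm_leadingCoeff fun z hz =>
          eval_angularDeriv_ne_zero (hdeg ▸ hN) (hdeg ▸ hc) hroots hz
    _ = ‖N - c‖ * Q.mahlerMeasure := by
        rw [leadingCoeff_angularDeriv hNc, norm_mul, norm_leadingCoeff_discReflect, hdeg]

theorem logMahlerMeasure_angularDeriv_le (hQ : Q.natDegree ≤ N) (hc : 2 * c.re ≤ N)
    (hD : angularDeriv c Q ≠ 0) :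
    (angularDeriv c Q).logMahlerMeasure ≤ (C (N - c) * Q).logMahlerMeasure := by
  rw [logMahlerMeasure_eq_log_MahlerMeasure, logMahlerMeasure_eq_log_MahlerMeasure,
    mahlerMeasure_mul, mahlerMeasure_const]
  exact log_le_log (mahlerMeasure_pos_of_ne_zero hD) (mahlerMeasure_angularDeriv_le hQ hc)

theorem circleAverage_posLog_norm_eval_angularDeriv_le (hQ : Q.natDegree ≤ N)
    (hc : 2 * c.re ≤ N) :
    circleAverage (fun z => log⁺ ‖(angularDeriv c Q).eval z‖) 0 1 ≤
      circleAverage (fun z => log⁺ ‖(C (N - c) * Q).eval z‖) 0 1 := by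
  rcases eq_or_ne (N - c) 0 with hNc | hNc
  · have hD : angularDeriv c Q = 0 := by
      have hle := mahlerMeasure_angularDeriv_le hQ hc
      rw [hNc, norm_zero, zero_mul] at hle
      exact (mahlerMeasure_eq_zero_iff _).1 (hle.antisymm (mahlerMeasure_nonneg _))
    simp [hD, hNc]
  rw [← circleAverage_logMahlerMeasure_sub _ N, ← circleAverage_logMahlerMeasure_sub _ N]
  refine circleAverage_mono_codiscreteWithin one_ne_zero
    (circleIntegrable_logMahlerMeasure_sub _ _) (circleIntegrable_logMahlerMeasure_sub _ _) ?_
  filter_upwards [compl_singleton_mem_codiscreteWithin ((angularDeriv c Q).coeff N)] with a ha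
  have hscale : C a = C (N - c) * C (a / (N - c)) := by
    rw [← C_mul, mul_div_cancel₀ _ hNc]
  have hD : angularDeriv c (Q - C (a / (N - c)) * X ^ N) = angularDeriv c Q - C a * X ^ N := by
    ext m
    rcases eq_or_ne m N with rfl | hm
    · simp [coeff_angularDeriv, mul_div_cancel₀ _ hNc]
    · simp [coeff_angularDeriv, coeff_X_pow, hm]
  have hD0 : angularDeriv c Q - C a * X ^ N ≠ 0 := by
    intro h
    refine ha (Eq.symm ?_)
    simpa [sub_eq_zero] using congrArg (coeff · N) h
  rw [← hD] at hD0 ⊢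
  rw [hscale, mul_assoc, ← mul_sub]
  exact logMahlerMeasure_angularDeriv_le
    ((natDegree_sub_le _ _).trans (max_le hQ (natDegree_C_mul_X_pow_le _ _))) hc hD0

end AngularDeriv

section PosLog

variable {p : ℝ}

theorem lintegral_posLog_exp_mul_exp_neg (hp : 0 < p) :
    ∫⁻ s : ℝ, ENNReal.ofReal (log⁺ (exp s) * exp (-(p * s))) = ENNReal.ofReal (1 / p) ^ 2 := by
  have hgamma : ∫ s in Ioi 0, s * exp (-(p * s)) = (1 / p) ^ 2 := by
    simpa [show (2 : ℝ) - 1 = 1 by norm_num] using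
      integral_rpow_mul_exp_neg_mul_Ioi (a := 2) two_pos hp
  have hint : IntegrableOn (fun s => s * exp (-(p * s))) (Ioi 0) :=
    .of_integral_ne_zero (by rw [hgamma]; positivity)
  have hmax : ∀ s, ENNReal.ofReal (log⁺ (exp s) * exp (-(p * s))) =
      (Ioi 0).indicator (fun s => ENNReal.ofReal (s * exp (-(p * s)))) s := by
    intro s
    rcases le_or_gt s 0 with hs | hs
    · simp [posLog_apply, hs]
    · simp [posLog_apply, hs, hs.le]
  simp_rw [hmax]
  rw [lintegral_indicator measurableSet_Ioi, ← ofReal_integral_eq_lintegral_ofReal hint, hgamma,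
    ENNReal.ofReal_pow (by positivity)]
  filter_upwards [ae_restrict_mem measurableSet_Ioi] with s hs
  exact mul_nonneg (le_of_lt hs) (exp_nonneg _)

theorem lintegral_posLog_exp_mul_mul_exp_neg (hp : 0 < p) {u : ℝ} (hu : 0 ≤ u) :
    ∫⁻ s : ℝ, ENNReal.ofReal (log⁺ (exp s * u) * exp (-(p * s))) =
      ENNReal.ofReal (1 / p) ^ 2 * ENNReal.ofReal u ^ p := by
  rcases hu.eq_or_lt with rfl | hu
  · simp [hp]
  rw [← lintegral_sub_right_eq_self _ (log u), ← lintegral_posLog_exp_mul_exp_neg hp,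
    ← lintegral_mul_const _ (by fun_prop)]
  refine lintegral_congr fun s => ?_
  have hscale : exp (-(p * (s - log u))) = exp (-(p * s)) * u ^ p := by
    rw [rpow_def_of_pos hu, ← exp_add]
    ring_nf
  rw [exp_sub, exp_log hu, div_mul_cancel₀ _ hu.ne', hscale, ← mul_assoc,
    ENNReal.ofReal_mul (mul_nonneg posLog_nonneg (exp_nonneg _)),
    ENNReal.ofReal_rpow_of_nonneg hu.le hp.le]

variable {α E F : Type*} [MeasurableSpace α] [NormedAddCommGroup E] [NormedAddCommGroup F]
  {μ : Measure α} [SFinite μ]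

theorem lintegral_lintegral_posLog_mul_exp_neg {f : α → E} (hf : AEStronglyMeasurable f μ)
    (hp : 0 < p) :
    ∫⁻ s : ℝ, (∫⁻ x, ENNReal.ofReal (log⁺ (exp s * ‖f x‖)) ∂μ) *
        ENNReal.ofReal (exp (-(p * s))) =
      ENNReal.ofReal (1 / p) ^ 2 * ∫⁻ x, ‖f x‖ₑ ^ p ∂μ := by
  have hnorm : AEMeasurable (fun x => ‖f x‖) μ := hf.norm.aemeasurable
  have hmeas : AEMeasurable
      (Function.uncurry fun (x : α) (s : ℝ) =>
        ENNReal.ofReal (log⁺ (exp s * ‖f x‖) * exp (-(p * s)))) (μ.prod volume) := by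
    have := hnorm.comp_fst (ν := (volume : Measure ℝ))
    simp only [Function.uncurry_def]
    fun_prop
  simp_rw [← ofReal_norm]
  rw [← lintegral_const_mul'' _ (by fun_prop)]
  simp_rw [← lintegral_posLog_exp_mul_mul_exp_neg hp (norm_nonneg _)]
  rw [lintegral_lintegral_swap hmeas]
  refine lintegral_congr fun s => ?_
  rw [← lintegral_mul_const'' _ (by fun_prop)]
  refine lintegral_congr fun x => ?_
  rw [ENNReal.ofReal_mul posLog_nonneg]

theorem lintegral_enorm_rpow_le_of_posLog {f : α → E} {g : α → F}
    (hf : AEStronglyMeasurable f μ) (hg : AEStronglyMeasurable g μ)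
    (h : ∀ t : ℝ, 0 < t → ∫⁻ x, ENNReal.ofReal (log⁺ (t * ‖f x‖)) ∂μ ≤
      ∫⁻ x, ENNReal.ofReal (log⁺ (t * ‖g x‖)) ∂μ) (hp : 0 < p) :
    ∫⁻ x, ‖f x‖ₑ ^ p ∂μ ≤ ∫⁻ x, ‖g x‖ₑ ^ p ∂μ := by
  have hconst : ENNReal.ofReal (1 / p) ^ 2 ≠ 0 := by simp [hp]
  rw [← ENNReal.mul_le_mul_iff_right hconst (by finiteness),
    ← lintegral_lintegral_posLog_mul_exp_neg hf hp, ← lintegral_lintegral_posLog_mul_exp_neg hg hp]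
  exact lintegral_mono fun s => mul_le_mul_left (h _ (exp_pos s)) _

theorem lintegral_enorm_eval_angularDeriv_rpow_le {c : ℂ} {Q : ℂ[X]} {N : ℕ}
    (hQ : Q.natDegree ≤ N) (hc : 2 * c.re ≤ N) (hp : 0 < p) :
    ∫⁻ θ in Ioc 0 (2 * π), ‖(angularDeriv c Q).eval (circleMap 0 1 θ)‖ₑ ^ p ≤
      ‖N - c‖ₑ ^ p * ∫⁻ θ in Ioc 0 (2 * π), ‖Q.eval (circleMap 0 1 θ)‖ₑ ^ p := by
  have hposLog : ∀ (S : ℂ[X]) (t : ℝ), 0 < t →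
      ∫⁻ θ in Ioc 0 (2 * π), ENNReal.ofReal (log⁺ (t * ‖S.eval (circleMap 0 1 θ)‖)) =
        ENNReal.ofReal (2 * π * circleAverage (fun z => log⁺ ‖((t : ℂ) • S).eval z‖) 0 1) := by
    intro S t ht
    rw [← lintegral_ofReal_comp_circleMap]
    · simp [abs_of_pos ht]
    · exact ContinuousOn.circleIntegrable' (by fun_prop)
    · exact fun z => posLog_nonneg
  calc ∫⁻ θ in Ioc 0 (2 * π), ‖(angularDeriv c Q).eval (circleMap 0 1 θ)‖ₑ ^ p
      ≤ ∫⁻ θ in Ioc 0 (2 * π), ‖(C (N - c) * Q).eval (circleMap 0 1 θ)‖ₑ ^ p := by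
        refine lintegral_enorm_rpow_le_of_posLog
          (Continuous.aestronglyMeasurable (by fun_prop))
          (Continuous.aestronglyMeasurable (by fun_prop)) (fun t ht => ?_) hp
        rw [hposLog _ t ht, hposLog _ t ht, ← map_smul, ← mul_smul_comm]
        gcongr ENNReal.ofReal (_ * ?_)
        exact circleAverage_posLog_norm_eval_angularDeriv_le
          ((natDegree_smul_le (t : ℂ) Q).trans hQ) hc
    _ = ‖N - c‖ₑ ^ p * ∫⁻ θ in Ioc 0 (2 * π), ‖Q.eval (circleMap 0 1 θ)‖ₑ ^ p := by
        rw [← lintegral_const_mul' _ _ (by finiteness)]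
        simp [ENNReal.mul_rpow_of_nonneg, hp.le]

end PosLog

section TrigPoly

/-- `T` is a complex trigonometric polynomial of degree at most `n`, encoded by the algebraic
polynomial `e^{inθ} T(θ)` in `e^{iθ}`. -/
def IsTrigPoly (n : ℕ) (T : ℝ → ℂ) : Prop :=
  ∃ Q : ℂ[X], Q.natDegree ≤ 2 * n ∧
    ∀ θ : ℝ, T θ = Complex.exp (-(n * θ * Complex.I)) * Q.eval (circleMap 0 1 θ)

namespace IsTrigPoly

variable {n m : ℕ} {S T : ℝ → ℂ}

theorem mono (hT : IsTrigPoly n T) (hnm : n ≤ m) : IsTrigPoly m T := by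
  obtain ⟨Q, hQ, hTQ⟩ := hT
  refine ⟨X ^ (m - n) * Q, natDegree_mul_le.trans ?_, fun θ => ?_⟩
  · rw [natDegree_X_pow]
    omega
  · rw [hTQ, eval_mul, eval_pow, eval_X, circleMap_zero, Complex.ofReal_one, one_mul,
      ← Complex.exp_nat_mul, ← mul_assoc, ← Complex.exp_add, Nat.cast_sub hnm]
    ring_nf

theorem const (c : ℂ) : IsTrigPoly 0 fun _ => c :=
  ⟨C c, by simp, by simp⟩

theorem mul (hS : IsTrigPoly n S) (hT : IsTrigPoly m T) :
    IsTrigPoly (n + m) fun θ => S θ * T θ := by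
  obtain ⟨Q, hQ, hSQ⟩ := hS
  obtain ⟨R, hR, hTR⟩ := hT
  refine ⟨Q * R, natDegree_mul_le.trans (by omega), fun θ => ?_⟩
  simp only [hSQ, hTR]
  rw [eval_mul, Nat.cast_add, add_mul, add_mul, neg_add, Complex.exp_add]
  ring

theorem pow (hT : IsTrigPoly n T) (m : ℕ) : IsTrigPoly (m * n) fun θ => T θ ^ m := by
  induction m with
  | zero => simpa using const 1
  | succ m ih => simpa only [pow_succ, Nat.succ_mul] using ih.mul hT

theorem sum {ι : Type*} {s : Finset ι} {T : ι → ℝ → ℂ} (hT : ∀ i ∈ s, IsTrigPoly n (T i)) :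
    IsTrigPoly n fun θ => ∑ i ∈ s, T i θ := by
  choose! Q hQ hTQ using hT
  refine ⟨∑ i ∈ s, Q i, natDegree_sum_le_of_forall_le s Q hQ, fun θ => ?_⟩
  rw [eval_finsetSum, Finset.mul_sum]
  exact Finset.sum_congr rfl fun i hi => hTQ i hi θ

theorem prod {ι : Type*} {s : Finset ι} {n : ι → ℕ} {T : ι → ℝ → ℂ}
    (hT : ∀ i ∈ s, IsTrigPoly (n i) (T i)) :
    IsTrigPoly (∑ i ∈ s, n i) fun θ => ∏ i ∈ s, T i θ := by
  classical
  induction s using Finset.induction_on with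
  | empty => simpa using const 1
  | insert i s hi ih =>
    simp only [Finset.prod_insert hi, Finset.sum_insert hi]
    exact (hT i (by simp)).mul (ih fun j hj => hT j (by simp [hj]))

theorem cos_mul_add_sin_mul (a b : ℂ) : IsTrigPoly 1 fun θ => cos θ * a + sin θ * b := by
  refine ⟨C ((a - Complex.I * b) / 2) * X ^ 2 + C ((a + Complex.I * b) / 2),
    (natDegree_add_le _ _).trans (max_le (natDegree_C_mul_X_pow_le _ _) (by simp)), fun θ => ?_⟩
  have hinv : Complex.exp (-(θ * Complex.I)) * Complex.exp (θ * Complex.I) = 1 := by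
    rw [← Complex.exp_add, neg_add_cancel, Complex.exp_zero]
  simp only [eval_add, eval_mul, eval_C, eval_pow, eval_X, circleMap_zero, Complex.ofReal_one,
    one_mul, Nat.cast_one, Complex.ofReal_cos, Complex.ofReal_sin, Complex.cos, Complex.sin,
    neg_mul]
  linear_combination (-((a - Complex.I * b) / 2) * Complex.exp (θ * Complex.I)) * hinv

theorem lintegral_enorm_deriv_rpow_le (hT : IsTrigPoly n T) {p : ℝ} (hp : 0 < p) :
    ∫⁻ θ in Ioc 0 (2 * π), ‖deriv T θ‖ₑ ^ p ≤
      (n : ENNReal) ^ p * ∫⁻ θ in Ioc 0 (2 * π), ‖T θ‖ₑ ^ p := by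
  obtain ⟨Q, hQ, hTQ⟩ := hT
  have hexp : ∀ θ : ℝ, ‖Complex.exp (-(n * θ * Complex.I))‖ₑ = 1 := by
    intro θ
    rw [← ofReal_norm, Complex.norm_exp]
    simp
  have hderiv : ∀ θ, deriv T θ =
      Complex.exp (-(n * θ * Complex.I)) *
        (Complex.I * (angularDeriv (n : ℂ) Q).eval (circleMap 0 1 θ)) := by
    intro θ
    have hlin : HasDerivAt (fun t : ℝ => -(n * t * Complex.I)) (-(n * 1 * Complex.I)) θ :=
      ((Complex.ofRealCLM.hasDerivAt.const_mul (n : ℂ)).mul_const Complex.I).neg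
    have hpoly := (Q.hasDerivAt (circleMap 0 1 θ)).comp θ (hasDerivAt_circleMap 0 1 θ)
    rw [funext hTQ]
    refine (hlin.cexp.mul hpoly).deriv.trans ?_
    rw [eval_angularDeriv]
    simp only [Function.comp_apply]
    ring
  have hN : ‖((2 * n : ℕ) : ℂ) - n‖ₑ = n := by
    rw [Nat.cast_mul, Nat.cast_two, two_mul, add_sub_cancel_right, ← ofReal_norm,
      Complex.norm_natCast, ENNReal.ofReal_natCast]
  have h := lintegral_enorm_eval_angularDeriv_rpow_le hQ (c := n) (by simp) hp
  simpa only [hN, hderiv, hTQ, enorm_mul, hexp, one_mul, ← ofReal_norm Complex.I, Complex.norm_I,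
    ENNReal.ofReal_one] using h

end IsTrigPoly

theorem isTrigPoly_mvPolynomial_eval {ι : Type*} (P : MvPolynomial ι ℝ) (x y : ι → ℝ) :
    IsTrigPoly P.totalDegree
      fun θ => ((MvPolynomial.eval (cos θ • x + sin θ • y) P : ℝ) : ℂ) := by
  simp only [MvPolynomial.eval_eq, Complex.ofReal_sum, Complex.ofReal_mul, Complex.ofReal_prod,
    Complex.ofReal_pow, Pi.add_apply, Pi.smul_apply, smul_eq_mul, Complex.ofReal_add]
  refine IsTrigPoly.sum fun d hd => ?_
  have hdeg : 0 + ∑ i ∈ d.support, d i * 1 ≤ P.totalDegree := by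
    simpa only [zero_add, mul_one, Finsupp.sum] using MvPolynomial.le_totalDegree hd
  refine IsTrigPoly.mono ?_ hdeg
  exact (IsTrigPoly.const _).mul
    (IsTrigPoly.prod fun i _ => (IsTrigPoly.cos_mul_add_sin_mul (x i) (y i)).pow (d i))

end TrigPoly

section Ellipse

variable {ι 𝕜 : Type*} [NontriviallyNormedField 𝕜]

theorem hasFDerivAt_mvPolynomial_eval [Fintype ι] (P : MvPolynomial ι 𝕜) (x : ι → 𝕜) :
    HasFDerivAt (fun y => MvPolynomial.eval y P)
      (∑ j, MvPolynomial.eval x (MvPolynomial.pderiv j P) •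
        (ContinuousLinearMap.proj j : (ι → 𝕜) →L[𝕜] 𝕜)) x := by
  classical
  induction P using MvPolynomial.induction_on with
  | C a =>
    simp only [MvPolynomial.eval_C, MvPolynomial.pderiv_C, map_zero]
    refine (hasFDerivAt_const (𝕜 := 𝕜) a x).congr_fderiv ?_
    ext v
    simp
  | add P Q hP hQ =>
    simp only [map_add]
    refine (hP.fun_add hQ).congr_fderiv ?_
    ext v
    simp [add_mul, Finset.sum_add_distrib]
  | mul_X P i hP =>
    simp only [map_mul, MvPolynomial.eval_X]
    refine (hP.fun_mul (hasFDerivAt_apply i x)).congr_fderiv ?_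
    ext v
    simp [MvPolynomial.pderiv_X, Pi.single_apply, apply_ite, add_mul, ite_mul,
      Finset.sum_add_distrib, Finset.mul_sum, mul_assoc]

theorem fderiv_mvPolynomial_eval_apply [Fintype ι] (P : MvPolynomial ι 𝕜) (x v : ι → 𝕜) :
    fderiv 𝕜 (fun y => MvPolynomial.eval y P) x v =
      ∑ j, MvPolynomial.eval x (MvPolynomial.pderiv j P) * v j := by
  simp [(hasFDerivAt_mvPolynomial_eval P x).fderiv]

theorem continuous_fderiv_mvPolynomial_eval [Finite ι] (P : MvPolynomial ι 𝕜) :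
    Continuous (fderiv 𝕜 fun y => MvPolynomial.eval y P) := by
  have := Fintype.ofFinite ι
  have := fun Q : MvPolynomial ι 𝕜 => MvPolynomial.continuous_eval Q
  simp only [funext fun x => (hasFDerivAt_mvPolynomial_eval P x).fderiv]
  fun_prop

theorem continuous_fderiv_mvPolynomial_eval_uncurry [Finite ι] (P : MvPolynomial ι 𝕜) :
    Continuous fun z : (ι → 𝕜) × (ι → 𝕜) =>
      fderiv 𝕜 (fun y => MvPolynomial.eval y P) z.1 z.2 := by
  have := Fintype.ofFinite ι
  exact ((continuous_fderiv_mvPolynomial_eval P).comp continuous_fst).clm_apply continuous_snd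

theorem lintegral_enorm_fderiv_eval_ellipse_rpow_le [Finite ι]
    (P : MvPolynomial ι ℝ) (x y : ι → ℝ) {p : ℝ} (hp : 0 < p) :
    ∫⁻ θ in Ioc 0 (2 * π), ‖fderiv ℝ (fun w => MvPolynomial.eval w P)
        (cos θ • x + sin θ • y) (-sin θ • x + cos θ • y)‖ₑ ^ p ≤
      (P.totalDegree : ENNReal) ^ p *
        ∫⁻ θ in Ioc 0 (2 * π), ‖MvPolynomial.eval (cos θ • x + sin θ • y) P‖ₑ ^ p := by
  have := Fintype.ofFinite ι
  have hderiv : ∀ θ : ℝ,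
      deriv (fun t => ((MvPolynomial.eval (cos t • x + sin t • y) P : ℝ) : ℂ)) θ =
        (fderiv ℝ (fun w => MvPolynomial.eval w P) (cos θ • x + sin θ • y)
          (-sin θ • x + cos θ • y) : ℝ) := by
    intro θ
    have hcurve : HasDerivAt (fun t => cos t • x + sin t • y) (-sin θ • x + cos θ • y) θ :=
      ((hasDerivAt_cos θ).smul_const x).add ((hasDerivAt_sin θ).smul_const y)
    exact ((hasFDerivAt_mvPolynomial_eval P _).differentiableAt.hasFDerivAt.comp_hasDerivAt θ
      hcurve).ofReal_comp.deriv
  have hofReal : ∀ a : ℝ, ‖(a : ℂ)‖ₑ = ‖a‖ₑ := fun a => by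
    rw [← ofReal_norm, Complex.norm_real, ofReal_norm]
  simpa only [hderiv, hofReal] using
    (isTrigPoly_mvPolynomial_eval P x y).lintegral_enorm_deriv_rpow_le hp

end Ellipse

section Rotation

variable {E : Type*} [NormedAddCommGroup E] [NormedSpace ℝ E] [MeasurableSpace E] [BorelSpace E]
  [SecondCountableTopology E] {ν : Measure (E × E)} [SFinite ν] {F G : E × E → ENNReal}

theorem lintegral_lintegral_rotation (hν : ∀ θ, ν.map (ContinuousLinearMap.rotation θ) = ν)
    (hF : Measurable F) :
    ∫⁻ z, (∫⁻ θ in Ioc 0 (2 * π), F (ContinuousLinearMap.rotation θ z)) ∂ν =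
      ENNReal.ofReal (2 * π) * ∫⁻ z, F z ∂ν := by
  have hrot : Continuous fun q : (E × E) × ℝ => ContinuousLinearMap.rotation q.2 q.1 := by
    simp only [ContinuousLinearMap.rotation_apply]
    fun_prop
  have hinv : ∀ θ, ∫⁻ z, F (ContinuousLinearMap.rotation θ z) ∂ν = ∫⁻ z, F z ∂ν := fun θ => by
    rw [← lintegral_map hF (by fun_prop), hν]
  rw [lintegral_lintegral_swap (f := fun z θ => F (ContinuousLinearMap.rotation θ z))
    (hF.comp hrot.measurable).aemeasurable]
  simp [hinv, mul_comm]

theorem lintegral_le_lintegral_of_rotation (hν : ∀ θ, ν.map (ContinuousLinearMap.rotation θ) = ν)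
    (hF : Measurable F) (hG : Measurable G)
    (h : ∀ z, ∫⁻ θ in Ioc 0 (2 * π), F (ContinuousLinearMap.rotation θ z) ≤
      ∫⁻ θ in Ioc 0 (2 * π), G (ContinuousLinearMap.rotation θ z)) :
    ∫⁻ z, F z ∂ν ≤ ∫⁻ z, G z ∂ν := by
  have hpi : ENNReal.ofReal (2 * π) ≠ 0 := by simp [pi_pos]
  rw [← ENNReal.mul_le_mul_iff_right hpi ENNReal.ofReal_ne_top,
    ← lintegral_lintegral_rotation hν hF, ← lintegral_lintegral_rotation hν hG]
  exact lintegral_mono h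

end Rotation

section Gaussian

theorem toReal_eLpNorm_eq_integral_abs_rpow {α : Type*} [MeasurableSpace α] {μ : Measure α}
    {f : α → ℝ} (hf : AEStronglyMeasurable f μ) {p : ℝ} (hp : 0 < p) :
    (eLpNorm f (.ofReal p) μ).toReal = (∫ x, |f x| ^ p ∂μ) ^ (1 / p) := by
  rw [toReal_eLpNorm hf, lpNorm_eq_integral_norm_rpow_toReal (by simpa) ENNReal.ofReal_ne_top hf,
    ENNReal.toReal_ofReal hp.le, one_div]
  rfl

theorem lintegral_enorm_dual_rpow {E : Type*} [NormedAddCommGroup E] [NormedSpace ℝ E]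
    [MeasurableSpace E] [BorelSpace E] {μ : Measure E} [IsGaussian μ] (L : StrongDual ℝ E)
    (hL : μ[L] = 0) {p : ℝ} (hp : 0 ≤ p) :
    ∫⁻ x, ‖L x‖ₑ ^ p ∂μ = (∫⁻ t, ‖t‖ₑ ^ p ∂gaussianReal 0 1) * ‖√Var[L; μ]‖ₑ ^ p := by
  have hmap : μ.map L = (gaussianReal 0 1).map (√Var[L; μ] * ·) := by
    rw [IsGaussian.map_eq_gaussianReal, hL, gaussianReal_map_const_mul, mul_zero, mul_one]
    congr 1
    ext
    simp [variance_nonneg]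
  calc ∫⁻ x, ‖L x‖ₑ ^ p ∂μ = ∫⁻ t, ‖t‖ₑ ^ p ∂μ.map L := by
        rw [lintegral_map (by fun_prop) (by fun_prop)]
    _ = ∫⁻ t, ‖t‖ₑ ^ p * ‖√Var[L; μ]‖ₑ ^ p ∂gaussianReal 0 1 := by
        rw [hmap, lintegral_map (by fun_prop) (by fun_prop)]
        simp_rw [enorm_mul, ENNReal.mul_rpow_of_nonneg _ _ hp, mul_comm]
    _ = _ := lintegral_mul_const _ (by fun_prop)

variable {ι : Type*} [Finite ι] {μ : Measure (ι → ℝ)} [IsGaussian μ]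

theorem memLp_mvPolynomial_eval (P : MvPolynomial ι ℝ) {q : ENNReal} (hq : q ≠ ⊤) :
    MemLp (fun x => MvPolynomial.eval x P) q μ := by
  have := Fintype.ofFinite ι
  induction P using MvPolynomial.induction_on generalizing q with
  | C a => simpa using memLp_const a
  | add P Q hP hQ =>
    simp only [map_add]
    exact (hP hq).add (hQ hq)
  | mul_X P i hP =>
    have h2q : 2 * q ≠ ⊤ := by finiteness
    have hX : MemLp (fun x : ι → ℝ => x i) (2 * q) μ :=
      IsGaussian.memLp_dual μ (ContinuousLinearMap.proj i) _ h2q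
    have : ENNReal.HolderTriple (2 * q) (2 * q) q := ⟨by
      rw [ENNReal.mul_inv (by simp) (by simp), ← add_mul, ENNReal.inv_two_add_inv_two, one_mul]⟩
    simp only [map_mul, MvPolynomial.eval_X]
    exact hX.mul (hP h2q)

theorem lintegral_enorm_fderiv_eval_rpow_le (hμ : ∀ L : StrongDual ℝ (ι → ℝ), μ[L] = 0)
    (P : MvPolynomial ι ℝ) {p : ℝ} (hp : 0 < p) :
    ∫⁻ z, ‖fderiv ℝ (fun w => MvPolynomial.eval w P) z.1 z.2‖ₑ ^ p ∂μ.prod μ ≤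
      (P.totalDegree : ENNReal) ^ p * ∫⁻ x, ‖MvPolynomial.eval x P‖ₑ ^ p ∂μ := by
  have := Fintype.ofFinite ι
  have hF : Measurable fun z : (ι → ℝ) × (ι → ℝ) =>
      ‖fderiv ℝ (fun w => MvPolynomial.eval w P) z.1 z.2‖ₑ ^ p := by
    have := (continuous_fderiv_mvPolynomial_eval_uncurry P).measurable
    fun_prop
  have hG : Measurable fun x : ι → ℝ => ‖MvPolynomial.eval x P‖ₑ ^ p := by
    have := (MvPolynomial.continuous_eval P).measurable
    fun_prop
  calc ∫⁻ z, ‖fderiv ℝ (fun w => MvPolynomial.eval w P) z.1 z.2‖ₑ ^ p ∂μ.prod μ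
      ≤ ∫⁻ z, (P.totalDegree : ENNReal) ^ p * ‖MvPolynomial.eval z.1 P‖ₑ ^ p ∂μ.prod μ := by
        refine lintegral_le_lintegral_of_rotation
          (IsGaussian.map_rotation_eq_self_of_forall_strongDual_eq_zero hμ) hF
          ((hG.comp measurable_fst).const_mul _) fun z => ?_
        rw [lintegral_const_mul' _ _ (by finiteness)]
        simp only [ContinuousLinearMap.rotation_apply]
        exact lintegral_enorm_fderiv_eval_ellipse_rpow_le P z.1 z.2 hp
    _ = (P.totalDegree : ENNReal) ^ p * ∫⁻ x, ‖MvPolynomial.eval x P‖ₑ ^ p ∂μ := by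
        rw [lintegral_const_mul' _ _ (by finiteness)]
        congr 1
        exact measurePreserving_fst.lintegral_comp hG

theorem lintegral_enorm_sqrt_variance_fderiv_eval_rpow_le
    (hμ : ∀ L : StrongDual ℝ (ι → ℝ), μ[L] = 0) (P : MvPolynomial ι ℝ) {p : ℝ} (hp : 0 < p) :
    (∫⁻ t, ‖t‖ₑ ^ p ∂gaussianReal 0 1) *
        ∫⁻ x, ‖√Var[fderiv ℝ (fun w => MvPolynomial.eval w P) x; μ]‖ₑ ^ p ∂μ ≤
      (P.totalDegree : ENNReal) ^ p * ∫⁻ x, ‖MvPolynomial.eval x P‖ₑ ^ p ∂μ := by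
  have := Fintype.ofFinite ι
  have hmeas : Measurable fun z : (ι → ℝ) × (ι → ℝ) =>
      ‖fderiv ℝ (fun w => MvPolynomial.eval w P) z.1 z.2‖ₑ ^ p := by
    have := (continuous_fderiv_mvPolynomial_eval_uncurry P).measurable
    fun_prop
  have hmoment : ∫⁻ t, ‖t‖ₑ ^ p ∂gaussianReal 0 1 ≠ ⊤ := by
    have h := lintegral_rpow_enorm_lt_top_of_eLpNorm_lt_top (by simpa) ENNReal.ofReal_ne_top
      (memLp_id_gaussianReal p.toNNReal (μ := 0) (v := 1)).eLpNorm_lt_top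
    simpa only [ENNReal.toReal_ofReal hp.le, id] using h.ne
  calc _ = ∫⁻ x, ∫⁻ y, ‖fderiv ℝ (fun w => MvPolynomial.eval w P) x y‖ₑ ^ p ∂μ ∂μ := by
        simp_rw [lintegral_enorm_dual_rpow _ (hμ _) hp.le]
        rw [lintegral_const_mul' _ _ hmoment]
    _ = ∫⁻ z, ‖fderiv ℝ (fun w => MvPolynomial.eval w P) z.1 z.2‖ₑ ^ p ∂μ.prod μ :=
        (lintegral_prod _ hmeas.aemeasurable).symm
    _ ≤ _ := lintegral_enorm_fderiv_eval_rpow_le hμ P hp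

theorem eLpNorm_sqrt_variance_fderiv_eval_le
    (hμ : ∀ L : StrongDual ℝ (ι → ℝ), μ[L] = 0) (P : MvPolynomial ι ℝ) {p : ℝ} (hp : 0 < p) :
    eLpNorm id (.ofReal p) (gaussianReal 0 1) *
        eLpNorm (fun x => √Var[fderiv ℝ (fun w => MvPolynomial.eval w P) x; μ]) (.ofReal p) μ ≤
      P.totalDegree * eLpNorm (fun x => MvPolynomial.eval x P) (.ofReal p) μ := by
  have hp0 : ENNReal.ofReal p ≠ 0 := by simpa
  have hinv : 0 ≤ 1 / p := by positivity
  have hroot : (P.totalDegree : ENNReal) = ((P.totalDegree : ENNReal) ^ p) ^ (1 / p) := by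
    rw [one_div, ENNReal.rpow_rpow_inv hp.ne']
  simp only [eLpNorm_eq_lintegral_rpow_enorm_toReal hp0 ENNReal.ofReal_ne_top,
    ENNReal.toReal_ofReal hp.le]
  rw [← ENNReal.mul_rpow_of_nonneg _ _ hinv, hroot, ← ENNReal.mul_rpow_of_nonneg _ _ hinv]
  exact ENNReal.rpow_le_rpow (lintegral_enorm_sqrt_variance_fderiv_eval_rpow_le hμ P hp) hinv

theorem continuous_variance_fderiv_eval (P : MvPolynomial ι ℝ) :
    Continuous fun x => Var[fderiv ℝ (fun w => MvPolynomial.eval w P) x; μ] := by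
  have := Fintype.ofFinite ι
  have := continuous_fderiv_mvPolynomial_eval P
  simp only [← covarianceBilinDual_self_eq_variance (IsGaussian.memLp_two_id (μ := μ))]
  fun_prop

theorem bernstein_markov_moment_general (hμ : ∀ L : StrongDual ℝ (ι → ℝ), μ[L] = 0)
    (P : MvPolynomial ι ℝ) {p : ℝ} (hp : 0 < p) :
    (∫ t : ℝ, |t| ^ p ∂gaussianReal 0 1) ^ (1 / p) *
        (∫ x, |√Var[fderiv ℝ (fun w => MvPolynomial.eval w P) x; μ]| ^ p ∂μ) ^ (1 / p) ≤
      P.totalDegree * (∫ x, |MvPolynomial.eval x P| ^ p ∂μ) ^ (1 / p) := by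
  have hP : MemLp (fun x => MvPolynomial.eval x P) (.ofReal p) μ :=
    memLp_mvPolynomial_eval P ENNReal.ofReal_ne_top
  have hsd : AEStronglyMeasurable
      (fun x => √Var[fderiv ℝ (fun w => MvPolynomial.eval w P) x; μ]) μ :=
    (continuous_variance_fderiv_eval P).sqrt.aestronglyMeasurable
  have h := ENNReal.toReal_mono (by finiteness [hP.eLpNorm_ne_top])
    (eLpNorm_sqrt_variance_fderiv_eval_le hμ P hp)
  rwa [ENNReal.toReal_mul, ENNReal.toReal_mul, ENNReal.toReal_natCast,
    toReal_eLpNorm_eq_integral_abs_rpow aestronglyMeasurable_id hp,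
    toReal_eLpNorm_eq_integral_abs_rpow hsd hp,
    toReal_eLpNorm_eq_integral_abs_rpow hP.aestronglyMeasurable hp] at h

end Gaussian

section StandardGaussian

theorem gaussMeasure_eq_map_stdGaussian (k : ℕ) :
    gaussMeasure k =
      (stdGaussian (EuclideanSpace ℝ (Fin k))).map (EuclideanSpace.equiv (Fin k) ℝ) := by
  rw [← map_pi_eq_stdGaussian, Measure.map_map (by fun_prop) (by fun_prop)]
  exact Measure.map_id.symm

instance isGaussian_gaussMeasure (k : ℕ) : IsGaussian (gaussMeasure k) := by
  rw [gaussMeasure_eq_map_stdGaussian]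
  infer_instance

theorem integral_dual_gaussMeasure {k : ℕ} (L : StrongDual ℝ (Fin k → ℝ)) :
    (gaussMeasure k)[L] = 0 := by
  rw [gaussMeasure_eq_map_stdGaussian, integral_map (by fun_prop) (by fun_prop)]
  exact integral_strongDual_stdGaussian
    (L ∘L (EuclideanSpace.equiv (Fin k) ℝ : EuclideanSpace ℝ (Fin k) →L[ℝ] (Fin k → ℝ)))

theorem variance_sum_mul_gaussMeasure {k : ℕ} (a : Fin k → ℝ) :
    Var[fun y => ∑ j, a j * y j; gaussMeasure k] = ∑ j, a j ^ 2 := by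
  have hLp : ∀ j, MemLp (fun t => a j * t) 2 (gaussianReal 0 1) := fun j =>
    (memLp_id_gaussianReal 2).const_mul (a j)
  have hvar : ∀ j, Var[fun t => a j * t; gaussianReal 0 1] = a j ^ 2 := fun j =>
    (variance_const_mul (a j) id _).trans (by simp)
  have h := variance_sum_pi (μ := fun _ => gaussianReal 0 1) hLp
  simp only [hvar] at h
  rw [← h, gaussMeasure]
  congr 1
  ext y
  simp

theorem sqrt_variance_fderiv_eval_gaussMeasure {k : ℕ} (P : MvPolynomial (Fin k) ℝ)
    (x : Fin k → ℝ) :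
    √Var[fderiv ℝ (fun w => MvPolynomial.eval w P) x; gaussMeasure k] = gradNorm P x := by
  have hlin : ⇑(fderiv ℝ (fun w => MvPolynomial.eval w P) x) =
      fun y => ∑ j, MvPolynomial.eval x (MvPolynomial.pderiv j P) * y j :=
    funext (fderiv_mvPolynomial_eval_apply P x)
  rw [hlin, variance_sum_mul_gaussMeasure, gradNorm]

end StandardGaussian

/-- The Gaussian moment form of the dimension independent Bernstein–Markov inequality. -/
theorem bernstein_markov_moment (k : ℕ) (hk : 1 ≤ k) (p : ℝ) (hp : 0 < p)
    (P : MvPolynomial (Fin k) ℝ) :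
    (∫ t : ℝ, |t| ^ p ∂(gaussianReal 0 1)) ^ (1 / p) * lpNormGauss p (gradNorm P) ≤
      (P.totalDegree : ℝ) * lpNormGauss p (fun x => MvPolynomial.eval x P) := by
  simpa only [lpNormGauss, sqrt_variance_fderiv_eval_gaussMeasure] using
    bernstein_markov_moment_general integral_dual_gaussMeasure P hp
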